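/- Fix μ>0 and let U ⊆ ℝ⁴ be open. For every smooth function φ:U→ℂ one has, on U, the commutator identity □̃_μ((μ⁻²+N(X))^{1/2}·φ) − (μ⁻²+N(X))^{1/2}·□̃_μφ = 2μ²(μ⁻²+N(X))^{1/2}·(deg φ + 2φ). -/

import Mathlib

noncomputable section

/-- `N(X) = (x⁰)² + (x¹)² + (x²)² + (x³)²` for `X ∈ ℝ⁴`. -/
def Nq (X : Fin 4 → ℝ) : ℝ := ∑ i, X i ^ 2

/-- The `i`-th standard basis vector of `ℝ⁴`. -/
def e4 (i : Fin 4) : Fin 4 → ℝ := Pi.single i 1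

/-- The partial derivative `∂f/∂xⁱ` of a `ℂ`-valued function on `ℝ⁴`. -/
def pd (i : Fin 4) (f : (Fin 4 → ℝ) → ℂ) (X : Fin 4 → ℝ) : ℂ := fderiv ℝ f X (e4 i)

/-- The Laplacian `□f = Σᵢ ∂²f/∂(xⁱ)²`. -/
def lap (f : (Fin 4 → ℝ) → ℂ) (X : Fin 4 → ℝ) : ℂ := ∑ i, pd i (pd i f) X

/-- The degree operator `deg f = Σᵢ xⁱ ∂f/∂xⁱ`. -/
def degOp (f : (Fin 4 → ℝ) → ℂ) (X : Fin 4 → ℝ) : ℂ := ∑ i, (X i : ℂ) * pd i f X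

/-- The conformal Laplacian `□̃_μ f = □f + μ²(deg(deg f) + 3·deg f + 2f)`. -/
def boxTilde (μ : ℝ) (f : (Fin 4 → ℝ) → ℂ) (X : Fin 4 → ℝ) : ℂ :=
  lap f X + (μ ^ 2 : ℝ) * (degOp (degOp f) X + 3 * degOp f X + 2 * f X)

open Topology Filter

lemma pd_mul' (i : Fin 4) {f g : (Fin 4 → ℝ) → ℂ} {X : Fin 4 → ℝ}
    (hf : DifferentiableAt ℝ f X) (hg : DifferentiableAt ℝ g X) :
    pd i (fun Y => f Y * g Y) X = pd i f X * g X + f X * pd i g X := by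
  unfold pd
  rw [fderiv_fun_mul hf hg]
  simp
  ring

lemma pd_add' (i : Fin 4) {f g : (Fin 4 → ℝ) → ℂ} {X : Fin 4 → ℝ}
    (hf : DifferentiableAt ℝ f X) (hg : DifferentiableAt ℝ g X) :
    pd i (fun Y => f Y + g Y) X = pd i f X + pd i g X := by
  unfold pd
  rw [fderiv_fun_add hf hg]
  simp

lemma pd_congr' (i : Fin 4) {f g : (Fin 4 → ℝ) → ℂ} {X : Fin 4 → ℝ}
    (h : f =ᶠ[𝓝 X] g) : pd i f X = pd i g X := by
  unfold pd
  rw [h.fderiv_eq]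

lemma degOp_mul' {f g : (Fin 4 → ℝ) → ℂ} {X : Fin 4 → ℝ}
    (hf : DifferentiableAt ℝ f X) (hg : DifferentiableAt ℝ g X) :
    degOp (fun Y => f Y * g Y) X = degOp f X * g X + f X * degOp g X := by
  unfold degOp
  simp only [pd_mul' _ hf hg, Finset.sum_mul, Finset.mul_sum, ← Finset.sum_add_distrib]
  exact Finset.sum_congr rfl fun i _ => by ring

lemma degOp_add' {f g : (Fin 4 → ℝ) → ℂ} {X : Fin 4 → ℝ}
    (hf : DifferentiableAt ℝ f X) (hg : DifferentiableAt ℝ g X) :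
    degOp (fun Y => f Y + g Y) X = degOp f X + degOp g X := by
  unfold degOp
  simp only [pd_add' _ hf hg, ← Finset.sum_add_distrib, mul_add]

lemma degOp_congr' {f g : (Fin 4 → ℝ) → ℂ} {X : Fin 4 → ℝ}
    (h : f =ᶠ[𝓝 X] g) : degOp f X = degOp g X := by
  unfold degOp
  simp only [pd_congr' _ h]

lemma diff_coord (i : Fin 4) (X : Fin 4 → ℝ) :
    DifferentiableAt ℝ (fun Y : Fin 4 → ℝ => ((Y i : ℝ) : ℂ)) X := by
  have : DifferentiableAt ℝ (fun Y : Fin 4 → ℝ => Y i) X := by fun_prop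
  exact Complex.ofRealCLM.differentiableAt.comp X this

lemma pd_ofReal (i : Fin 4) {f : (Fin 4 → ℝ) → ℝ} {f' : (Fin 4 → ℝ) →L[ℝ] ℝ} {X : Fin 4 → ℝ}
    (hf : HasFDerivAt f f' X) : pd i (fun Y => ((f Y : ℝ) : ℂ)) X = ((f' (e4 i) : ℝ) : ℂ) := by
  have := (Complex.ofRealCLM.hasFDerivAt (x := f X)).comp X hf
  unfold pd
  have h2 : fderiv ℝ (fun Y => ((f Y : ℝ) : ℂ)) X = _ := this.fderiv
  rw [h2]
  simp

lemma pd_coord (i : Fin 4) (X : Fin 4 → ℝ) :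
    pd i (fun Y : Fin 4 → ℝ => ((Y i : ℝ) : ℂ)) X = 1 := by
  rw [pd_ofReal i (hasFDerivAt_apply i X)]
  simp [e4]

/-- the square root factor -/
def Sq (c : ℝ) (Y : Fin 4 → ℝ) : ℂ := ((Real.sqrt (c + Nq Y) : ℝ) : ℂ)

lemma Nq_nonneg (X : Fin 4 → ℝ) : 0 ≤ Nq X := Finset.sum_nonneg fun i _ => sq_nonneg _

lemma Sq_ne {c : ℝ} (hc : 0 < c) (X : Fin 4 → ℝ) : Sq c X ≠ 0 := by
  have : 0 < c + Nq X := by have := Nq_nonneg X; linarith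
  unfold Sq
  exact_mod_cast (Real.sqrt_pos.2 this).ne'

lemma Sq_sq {c : ℝ} (hc : 0 < c) (X : Fin 4 → ℝ) : Sq c X ^ 2 = c + Nq X := by
  have : 0 ≤ c + Nq X := by have := Nq_nonneg X; linarith
  unfold Sq
  exact_mod_cast Real.sq_sqrt this

lemma sqrt_hasFDerivAt {c : ℝ} (hc : 0 < c) (X : Fin 4 → ℝ) :
    ∃ f' : (Fin 4 → ℝ) →L[ℝ] ℝ, HasFDerivAt (fun Y => Real.sqrt (c + Nq Y)) f' X ∧
      ∀ i, f' (e4 i) = X i * (Real.sqrt (c + Nq X))⁻¹ := by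
  have h0 : c + Nq X ≠ 0 := by have := Nq_nonneg X; linarith
  have h1 : HasFDerivAt (fun Y : Fin 4 → ℝ => Nq Y)
      (∑ j : Fin 4, (2 * X j) • ContinuousLinearMap.proj (R := ℝ) (φ := fun _ : Fin 4 => ℝ) j) X := by
    unfold Nq
    refine HasFDerivAt.fun_sum fun j _ => ?_
    have := (hasFDerivAt_apply (𝕜 := ℝ) j X).pow 2
    simpa using this
  refine ⟨_, (h1.const_add c).sqrt h0, fun i => ?_⟩
  have : (∑ j : Fin 4, 2 * X j * (Pi.single i (1 : ℝ) : Fin 4 → ℝ) j) = 2 * X i := by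
    simp [Pi.single_apply]
  simp [e4, this]
  ring

lemma Sq_diff {c : ℝ} (hc : 0 < c) (X : Fin 4 → ℝ) : DifferentiableAt ℝ (Sq c) X := by
  obtain ⟨f', h, -⟩ := sqrt_hasFDerivAt hc X
  exact Complex.ofRealCLM.differentiableAt.comp X h.differentiableAt

lemma pd_Sq {c : ℝ} (hc : 0 < c) (i : Fin 4) (X : Fin 4 → ℝ) :
    pd i (Sq c) X = (X i : ℂ) * (Sq c X)⁻¹ := by
  obtain ⟨f', h, h'⟩ := sqrt_hasFDerivAt hc X
  have := pd_ofReal i h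
  unfold Sq
  rw [this, h']
  push_cast
  rfl

lemma SqI_diff {c : ℝ} (hc : 0 < c) (X : Fin 4 → ℝ) :
    DifferentiableAt ℝ (fun Y => (Sq c Y)⁻¹) X := (Sq_diff hc X).inv (Sq_ne hc X)

lemma pd_SqI {c : ℝ} (hc : 0 < c) (i : Fin 4) (X : Fin 4 → ℝ) :
    pd i (fun Y => (Sq c Y)⁻¹) X = - (X i : ℂ) * (Sq c X)⁻¹ ^ 3 := by
  have h := pd_mul' i (Sq_diff hc X) (SqI_diff hc X)
  have h1 : (fun Y => Sq c Y * (Sq c Y)⁻¹) = fun _ => (1 : ℂ) := by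
    funext Y; exact mul_inv_cancel₀ (Sq_ne hc Y)
  rw [h1, pd_Sq hc] at h
  have h2 : pd i (fun _ => (1 : ℂ)) X = 0 := by simp [pd]
  rw [h2] at h
  have := Sq_ne hc X
  have h3 : Sq c X * pd i (fun Y => (Sq c Y)⁻¹) X = Sq c X * (- (X i : ℂ) * (Sq c X)⁻¹ ^ 3) := by
    field_simp
    field_simp at h
    linear_combination - h
  exact mul_left_cancel₀ this h3

lemma sum_sq_cast (X : Fin 4 → ℝ) : ∑ i, (X i : ℂ) ^ 2 = (Nq X : ℂ) := by
  unfold Nq; push_cast; rfl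

lemma degOp_Sq {c : ℝ} (hc : 0 < c) (X : Fin 4 → ℝ) :
    degOp (Sq c) X = Sq c X + (-c : ℂ) * (Sq c X)⁻¹ := by
  have h : degOp (Sq c) X = (Nq X : ℂ) * (Sq c X)⁻¹ := by
    unfold degOp
    rw [← sum_sq_cast, Finset.sum_mul]
    exact Finset.sum_congr rfl fun i _ => by rw [pd_Sq hc]; ring
  have := Sq_ne hc X
  rw [h]
  field_simp
  linear_combination - Sq_sq hc X

lemma degOp_SqI {c : ℝ} (hc : 0 < c) (X : Fin 4 → ℝ) :
    degOp (fun Y => (Sq c Y)⁻¹) X = - (Nq X : ℂ) * (Sq c X)⁻¹ ^ 3 := by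
  unfold degOp
  rw [← sum_sq_cast, ← Finset.sum_neg_distrib, Finset.sum_mul]
  exact Finset.sum_congr rfl fun i _ => by rw [pd_SqI hc]; ring

lemma degOp_degOp_Sq {c : ℝ} (hc : 0 < c) (X : Fin 4 → ℝ) :
    degOp (degOp (Sq c)) X = Sq c X + (-c : ℂ) * (Sq c X)⁻¹ + c * Nq X * (Sq c X)⁻¹ ^ 3 := by
  have h : degOp (Sq c) = fun Y => Sq c Y + (-c : ℂ) * (Sq c Y)⁻¹ := funext (degOp_Sq hc)
  rw [h, degOp_add' (Sq_diff hc X) ((SqI_diff hc X).const_mul _),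
    degOp_mul' (differentiableAt_const _) (SqI_diff hc X), degOp_Sq hc, degOp_SqI hc]
  have : degOp (fun _ => (-c : ℂ)) X = 0 := by simp [degOp, pd]
  rw [this]
  ring

lemma lap_Sq {c : ℝ} (hc : 0 < c) (X : Fin 4 → ℝ) :
    lap (Sq c) X = 4 * (Sq c X)⁻¹ - Nq X * (Sq c X)⁻¹ ^ 3 := by
  unfold lap
  have h : ∀ i, pd i (pd i (Sq c)) X = (Sq c X)⁻¹ - (X i : ℂ) ^ 2 * (Sq c X)⁻¹ ^ 3 := by
    intro i
    have h : pd i (Sq c) = fun Y => (Y i : ℂ) * (Sq c Y)⁻¹ := funext (pd_Sq hc i)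
    rw [h, pd_mul' i (diff_coord i X) (SqI_diff hc X), pd_coord, pd_SqI hc]
    ring
  simp only [h, Finset.sum_sub_distrib, ← Finset.sum_mul, sum_sq_cast]
  simp

lemma pd_Sq_diff {c : ℝ} (hc : 0 < c) (i : Fin 4) (X : Fin 4 → ℝ) :
    DifferentiableAt ℝ (pd i (Sq c)) X := by
  have h : pd i (Sq c) = fun Y => (Y i : ℂ) * (Sq c Y)⁻¹ := funext (pd_Sq hc i)
  rw [h]
  exact (diff_coord i X).mul (SqI_diff hc X)

lemma degOp_diff {f : (Fin 4 → ℝ) → ℂ} {X : Fin 4 → ℝ}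
    (h : ∀ i, DifferentiableAt ℝ (pd i f) X) : DifferentiableAt ℝ (degOp f) X := by
  unfold degOp
  exact DifferentiableAt.fun_sum fun i _ => (diff_coord i X).mul (h i)

lemma lap_mul' {f g : (Fin 4 → ℝ) → ℂ} {X : Fin 4 → ℝ}
    (hf : ∀ᶠ Y in 𝓝 X, DifferentiableAt ℝ f Y) (hg : ∀ᶠ Y in 𝓝 X, DifferentiableAt ℝ g Y)
    (hf' : ∀ i, DifferentiableAt ℝ (pd i f) X) (hg' : ∀ i, DifferentiableAt ℝ (pd i g) X) :
    lap (fun Y => f Y * g Y) X =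
      lap f X * g X + 2 * ∑ i, pd i f X * pd i g X + f X * lap g X := by
  unfold lap
  simp only [Finset.sum_mul, Finset.mul_sum, ← Finset.sum_add_distrib]
  refine Finset.sum_congr rfl fun i _ => ?_
  have h : pd i (fun Y => f Y * g Y) =ᶠ[𝓝 X] fun Y => pd i f Y * g Y + f Y * pd i g Y := by
    filter_upwards [hf, hg] with Y h1 h2 using pd_mul' i h1 h2
  have a := hf.self_of_nhds
  have b := hg.self_of_nhds
  rw [pd_congr' i h, pd_add' i ((hf' i).fun_mul b) (a.fun_mul (hg' i)), pd_mul' i (hf' i) b,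
    pd_mul' i a (hg' i)]
  ring

lemma degOp_degOp_mul' {f g : (Fin 4 → ℝ) → ℂ} {X : Fin 4 → ℝ}
    (hf : ∀ᶠ Y in 𝓝 X, DifferentiableAt ℝ f Y) (hg : ∀ᶠ Y in 𝓝 X, DifferentiableAt ℝ g Y)
    (hf' : ∀ i, DifferentiableAt ℝ (pd i f) X) (hg' : ∀ i, DifferentiableAt ℝ (pd i g) X) :
    degOp (degOp (fun Y => f Y * g Y)) X =
      degOp (degOp f) X * g X + 2 * (degOp f X * degOp g X) + f X * degOp (degOp g) X := by
  have h : degOp (fun Y => f Y * g Y) =ᶠ[𝓝 X] fun Y => degOp f Y * g Y + f Y * degOp g Y := by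
    filter_upwards [hf, hg] with Y h1 h2 using degOp_mul' h1 h2
  have a := hf.self_of_nhds
  have b := hg.self_of_nhds
  have hf2 := degOp_diff hf'
  have hg2 := degOp_diff hg'
  rw [degOp_congr' h, degOp_add' (hf2.fun_mul b) (a.fun_mul hg2), degOp_mul' hf2 b, degOp_mul' a hg2]
  ring

/-- Commutator identity: for every smooth `φ : U → ℂ` on an open `U ⊆ ℝ⁴`,
`□̃_μ((μ⁻²+N(X))^{1/2}·φ) − (μ⁻²+N(X))^{1/2}·□̃_μφ = 2μ²(μ⁻²+N(X))^{1/2}·(deg φ + 2φ)` on `U`. -/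
theorem stmt5 (μ : ℝ) (hμ : 0 < μ) (U : Set (Fin 4 → ℝ)) (hU : IsOpen U)
    (φ : (Fin 4 → ℝ) → ℂ) (hφ : ContDiffOn ℝ (⊤ : ℕ∞) φ U) :
    ∀ X ∈ U,
      boxTilde μ (fun Y => (Real.sqrt ((μ ^ 2)⁻¹ + Nq Y) : ℂ) * φ Y) X
        - (Real.sqrt ((μ ^ 2)⁻¹ + Nq X) : ℂ) * boxTilde μ φ X
      = 2 * (μ ^ 2 : ℝ) * (Real.sqrt ((μ ^ 2)⁻¹ + Nq X) : ℂ) * (degOp φ X + 2 * φ X) := by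
  intro X hX
  have hc : 0 < (μ ^ 2)⁻¹ := by positivity
  have hS : (fun Y => (Real.sqrt ((μ ^ 2)⁻¹ + Nq Y) : ℂ) * φ Y) =
    fun Y => Sq (μ ^ 2)⁻¹ Y * φ Y := rfl
  have hSX : (Real.sqrt ((μ ^ 2)⁻¹ + Nq X) : ℂ) = Sq (μ ^ 2)⁻¹ X := rfl
  rw [hS, hSX]
  have hcμ : (((μ ^ 2)⁻¹ : ℝ) : ℂ) * (μ ^ 2 : ℝ) = 1 := by
    have : (μ ^ 2)⁻¹ * μ ^ 2 = 1 := inv_mul_cancel₀ (by positivity)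
    exact_mod_cast this
  generalize (μ ^ 2)⁻¹ = c at *
  have hφX : ContDiffAt ℝ (⊤ : ℕ∞) φ X := hφ.contDiffAt (hU.mem_nhds hX)
  have hg : ∀ᶠ Y in 𝓝 X, DifferentiableAt ℝ φ Y := by
    filter_upwards [hU.mem_nhds hX] with Y hY
    exact (hφ.contDiffAt (hU.mem_nhds hY)).differentiableAt (by simp)
  have hf : ∀ᶠ Y in 𝓝 X, DifferentiableAt ℝ (Sq c) Y := Eventually.of_forall (Sq_diff hc)
  have hf' := fun i => pd_Sq_diff hc i X
  have hg' : ∀ i, DifferentiableAt ℝ (pd i φ) X := by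
    intro i
    have h1 : ContDiffAt ℝ 1 (fderiv ℝ φ) X :=
      hφX.fderiv_right (m := 1) (by norm_cast)
    exact (h1.differentiableAt (by simp)).clm_apply (differentiableAt_const _)
  have hcross : ∑ i, pd i (Sq c) X * pd i φ X = (Sq c X)⁻¹ * degOp φ X := by
    unfold degOp
    rw [Finset.mul_sum]
    exact Finset.sum_congr rfl fun i _ => by rw [pd_Sq hc]; ring
  unfold boxTilde
  rw [lap_mul' hf hg hf' hg', degOp_degOp_mul' hf hg hf' hg',
    degOp_mul' (Sq_diff hc X) hg.self_of_nhds, hcross, degOp_degOp_Sq hc, degOp_Sq hc, lap_Sq hc]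
  have hne := Sq_ne hc X
  have hsq := Sq_sq hc X
  have hN : (Nq X : ℂ) = Sq c X ^ 2 - c := by rw [hsq]; ring
  rw [hN]
  generalize ((μ ^ 2 : ℝ) : ℂ) = m at *
  have hm : m ≠ 0 := right_ne_zero_of_mul_eq_one hcμ
  have hcm : (c : ℂ) = m⁻¹ := eq_inv_of_mul_eq_one_left hcμ
  rw [hcm]
  field_simp
  ring
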